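/- The family of monomials x^k y^l θ^m, indexed by k ∈ ℕ and l, m ∈ {0,1,2}, forms a basis of O(R_q(2|1)) as a ℂ-vector space. -/

import Mathlib

/-!
`O(ℝ_q(2|1))`: the unital associative ℂ-algebra with generators `x`, `y`, `θ`,
defined as the quotient of the free algebra `ℂ⟨x,y,θ⟩` by the two-sided ideal
generated by `xy − q·yx`, `xθ − q·θx`, `yθ − q²·θy`, `y³`, `θ³`.
-/

noncomputable section

inductive Gen : Type
  | x | y | th

abbrev FA : Type := FreeAlgebra ℂ Gen

def Xf : FA := FreeAlgebra.ι ℂ Gen.x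
def Yf : FA := FreeAlgebra.ι ℂ Gen.y
def Tf : FA := FreeAlgebra.ι ℂ Gen.th

/-- The defining relations of `O(ℝ_q(2|1))`. -/
inductive QRel (q : ℂ) : FA → FA → Prop
  | xy : QRel q (Xf * Yf) (q • (Yf * Xf))
  | xth : QRel q (Xf * Tf) (q • (Tf * Xf))
  | yth : QRel q (Yf * Tf) ((q ^ 2) • (Tf * Yf))
  | ycube : QRel q (Yf ^ 3) 0
  | thcube : QRel q (Tf ^ 3) 0

/-- The algebra of functions on the Z₃-graded quantum superspace `ℝ_q(2|1)`. -/
abbrev Osp (q : ℂ) : Type := RingQuot (QRel q)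

def Xg (q : ℂ) : Osp q := RingQuot.mkAlgHom ℂ (QRel q) Xf
def Yg (q : ℂ) : Osp q := RingQuot.mkAlgHom ℂ (QRel q) Yf
def Tg (q : ℂ) : Osp q := RingQuot.mkAlgHom ℂ (QRel q) Tf

/-!
For `q ≠ 0` a generator moves past an ordered monomial `x ^ k * y ^ l * θ ^ m` at the cost of a
scalar, so the ordered monomials span a left ideal containing `1`. For independence, left
multiplication by the generators is modelled by weighted shifts of the formal basis
`ℕ × ℕ × ℕ`, with weights that vanish where an exponent of `y` or `θ` would reach `3`; in this
representation distinct monomials send the vacuum vector to distinct basis vectors.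
-/

lemma semiconjBy_inv_smul_of_mul_eq_smul {K A : Type*} [Semifield K] [Semiring A]
    [Algebra K A] {x y : A} {c : K} (hc : c ≠ 0) (h : x * y = c • (y * x)) :
    SemiconjBy y x (c⁻¹ • x) := by
  rw [SemiconjBy, smul_mul_assoc, h, inv_smul_smul₀ hc]

section OrderedMonomials

variable {R A : Type*} [CommSemiring R] [Semiring A] [Algebra R A] {x y z : A} {a b c : R}

lemma toSubmodule_adjoin_le_of_mul_mem {s : Set A} {M : Submodule R A} (one_mem : 1 ∈ M)
    (mul_mem : ∀ g ∈ s, ∀ u ∈ M, g * u ∈ M) :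
    Subalgebra.toSubmodule (Algebra.adjoin R s) ≤ M := by
  rw [Algebra.adjoin_eq_span, Submodule.span_le]
  intro u hu
  induction hu using Submonoid.closure_induction_left with
  | one => exact one_mem
  | mul_left g hg u _ hu => exact mul_mem g hg u hu

lemma middle_mul_monomial (hyx : SemiconjBy y x (a • x)) (k l m : ℕ) :
    y * (x ^ k * y ^ l * z ^ m) = a ^ k • (x ^ k * y ^ (l + 1) * z ^ m) := by
  have hyk : y * x ^ k = a ^ k • (x ^ k * y) := by
    rw [(hyx.pow_right k).eq, smul_pow, smul_mul_assoc]
  rw [← mul_assoc, ← mul_assoc, hyk, pow_succ']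
  simp only [smul_mul_assoc, mul_assoc]

lemma last_mul_monomial (hzx : SemiconjBy z x (b • x)) (hzy : SemiconjBy z y (c • y))
    (k l m : ℕ) :
    z * (x ^ k * y ^ l * z ^ m) = (b ^ k * c ^ l) • (x ^ k * y ^ l * z ^ (m + 1)) := by
  have hzkl : z * (x ^ k * y ^ l) = (b ^ k * c ^ l) • (x ^ k * y ^ l * z) := by
    rw [((hzx.pow_right k).mul_right (hzy.pow_right l)).eq, smul_pow, smul_pow,
      smul_mul_smul_comm, smul_mul_assoc]
  rw [← mul_assoc, hzkl, smul_mul_assoc, mul_assoc, ← pow_succ']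

lemma span_monomials_eq_top_of_semiconjBy (hyx : SemiconjBy y x (a • x))
    (hzx : SemiconjBy z x (b • x)) (hzy : SemiconjBy z y (c • y))
    (hgen : Algebra.adjoin R {x, y, z} = ⊤) :
    Submodule.span R (Set.range fun p : ℕ × ℕ × ℕ => x ^ p.1 * y ^ p.2.1 * z ^ p.2.2) = ⊤ := by
  set M := Submodule.span R (Set.range fun p : ℕ × ℕ × ℕ => x ^ p.1 * y ^ p.2.1 * z ^ p.2.2)
  have monomial_mem (k l m : ℕ) : x ^ k * y ^ l * z ^ m ∈ M :=
    Submodule.subset_span ⟨(k, l, m), rfl⟩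
  have one_mem : 1 ∈ M := by simpa using monomial_mem 0 0 0
  have mul_mem_of_monomial {g : A} (hg : ∀ k l m : ℕ, g * (x ^ k * y ^ l * z ^ m) ∈ M) :
      ∀ u ∈ M, g * u ∈ M := by
    change M ≤ M.comap (LinearMap.mulLeft R g)
    rw [Submodule.span_le]
    rintro _ ⟨p, rfl⟩
    exact hg _ _ _
  rw [← top_le_iff, ← Algebra.top_toSubmodule, ← hgen]
  refine toSubmodule_adjoin_le_of_mul_mem one_mem ?_
  rintro g (rfl | rfl | rfl) <;> refine mul_mem_of_monomial fun k l m => ?_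
  · rw [← mul_assoc, ← mul_assoc, ← pow_succ']
    exact monomial_mem _ _ _
  · rw [middle_mul_monomial hyx]
    exact M.smul_mem _ (monomial_mem _ _ _)
  · rw [last_mul_monomial hzx hzy]
    exact M.smul_mem _ (monomial_mem _ _ _)

variable (R x) in
lemma span_monomials_eq_span_truncated {s t : ℕ} (hy : y ^ s = 0) (hz : z ^ t = 0) :
    Submodule.span R (Set.range fun p : ℕ × ℕ × ℕ => x ^ p.1 * y ^ p.2.1 * z ^ p.2.2) =
      Submodule.span R (Set.range fun p : ℕ × Fin s × Fin t =>
        x ^ p.1 * y ^ (p.2.1 : ℕ) * z ^ (p.2.2 : ℕ)) := by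
  apply le_antisymm <;> rw [Submodule.span_le]
  · rintro _ ⟨⟨k, l, m⟩, rfl⟩
    rcases lt_or_ge l s with hl | hl
    · rcases lt_or_ge m t with hm | hm
      · exact Submodule.subset_span ⟨(k, ⟨l, hl⟩, ⟨m, hm⟩), rfl⟩
      · simp [pow_eq_zero_of_le hm hz]
    · simp [pow_eq_zero_of_le hl hy]
  · rintro _ ⟨⟨k, l, m⟩, rfl⟩
    exact Submodule.subset_span ⟨(k, l, m), rfl⟩

end OrderedMonomials

section WeightedShift

variable {R G : Type*} [CommSemiring R] [AddMonoid G]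

/-- The weighted shift operator on the free module with basis `G`: it translates the basis vector
at `i` by `g` and scales it by the weight `w i`. A zero weight truncates the shift. -/
def weightedShift (g : G) (w : G → R) : Module.End R (G →₀ R) :=
  Finsupp.linearCombination R fun i => Finsupp.single (g + i) (w i)

lemma weightedShift_single (g : G) (w : G → R) (i : G) (r : R) :
    weightedShift g w (Finsupp.single i r) = Finsupp.single (g + i) (r * w i) := by
  simp [weightedShift]

lemma weightedShift_mul (g h : G) (w v : G → R) :
    weightedShift g w * weightedShift h v =
      weightedShift (g + h) fun i => v i * w (h + i) := by
  refine Finsupp.lhom_ext fun i r => ?_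
  simp only [Module.End.mul_apply, weightedShift_single, add_assoc, mul_assoc]

lemma smul_weightedShift (c : R) (g : G) (w : G → R) :
    c • weightedShift g w = weightedShift g fun i => c * w i := by
  refine Finsupp.lhom_ext fun i r => ?_
  simp only [LinearMap.smul_apply, weightedShift_single, Finsupp.smul_single, smul_eq_mul,
    mul_left_comm]

lemma weightedShift_pow (g : G) (w : G → R) (n : ℕ) :
    weightedShift g w ^ n =
      weightedShift (n • g) fun i => ∏ j ∈ Finset.range n, w (j • g + i) := by
  induction n with
  | zero => exact Finsupp.lhom_ext fun i r => by simp [weightedShift_single]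
  | succ n ih => simp only [pow_succ', ih, weightedShift_mul, succ_nsmul', Finset.prod_range_succ]

lemma weightedShift_pow_succ_eq_zero {g : G} {w : G → R} {n : ℕ} (hw : ∀ i, w (n • g + i) = 0) :
    weightedShift g w ^ (n + 1) = 0 := by
  refine Finsupp.lhom_ext fun i r => ?_
  rw [weightedShift_pow, weightedShift_single,
    Finset.prod_eq_zero (Finset.self_mem_range_succ n) (hw i), mul_zero, Finsupp.single_zero,
    LinearMap.zero_apply]

lemma weightedShift_pow_single_of_weight_eq_one {g : G} {w : G → R} {n : ℕ} {i i' : G}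
    (hi : n • g + i = i') (hw : ∀ j < n, w (j • g + i) = 1) (r : R) :
    (weightedShift g w ^ n) (Finsupp.single i r) = Finsupp.single i' r := by
  rw [weightedShift_pow, weightedShift_single, hi,
    Finset.prod_eq_one fun j hj => hw j (Finset.mem_range.mp hj), mul_one]

lemma weightedShift_mul_eq_smul {H : Type*} [AddCommMonoid H] {g h : H} {w v : H → R} {c : R}
    (hwv : ∀ i, v i * w (h + i) = c * (w i * v (g + i))) :
    weightedShift g w * weightedShift h v = c • (weightedShift h v * weightedShift g w) := by
  rw [weightedShift_mul, weightedShift_mul, smul_weightedShift, add_comm g h, funext hwv]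

end WeightedShift

lemma Xg_mul_Yg (q : ℂ) : Xg q * Yg q = q • (Yg q * Xg q) := by
  simpa only [Xg, Yg, map_mul, map_smul] using RingQuot.mkAlgHom_rel ℂ (QRel.xy (q := q))

lemma Xg_mul_Tg (q : ℂ) : Xg q * Tg q = q • (Tg q * Xg q) := by
  simpa only [Xg, Tg, map_mul, map_smul] using RingQuot.mkAlgHom_rel ℂ (QRel.xth (q := q))

lemma Yg_mul_Tg (q : ℂ) : Yg q * Tg q = q ^ 2 • (Tg q * Yg q) := by
  simpa only [Yg, Tg, map_mul, map_smul] using RingQuot.mkAlgHom_rel ℂ (QRel.yth (q := q))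

lemma Yg_pow_three (q : ℂ) : Yg q ^ 3 = 0 := by
  simpa only [Yg, map_pow, map_zero] using RingQuot.mkAlgHom_rel ℂ (QRel.ycube (q := q))

lemma Tg_pow_three (q : ℂ) : Tg q ^ 3 = 0 := by
  simpa only [Tg, map_pow, map_zero] using RingQuot.mkAlgHom_rel ℂ (QRel.thcube (q := q))

lemma adjoin_Xg_Yg_Tg (q : ℂ) : Algebra.adjoin ℂ {Xg q, Yg q, Tg q} = ⊤ := by
  have hrange : Set.range (FreeAlgebra.ι ℂ : Gen → FA) = {Xf, Yf, Tf} := by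
    ext u
    constructor
    · rintro ⟨_ | _ | _, rfl⟩ <;> simp [Xf, Yf, Tf]
    · rintro (rfl | rfl | rfl) <;> exact ⟨_, rfl⟩
  have hsurj : (RingQuot.mkAlgHom ℂ (QRel q)).range = ⊤ :=
    AlgHom.range_eq_top _ |>.mpr (RingQuot.mkAlgHom_surjective ℂ (QRel q))
  rw [← hsurj, ← Algebra.map_top, ← FreeAlgebra.adjoin_range_ι, AlgHom.map_adjoin, hrange,
    Set.image_insert_eq, Set.image_pair]
  rfl

lemma span_monomials_eq_top {q : ℂ} (hq : q ≠ 0) :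
    Submodule.span ℂ (Set.range (fun p : ℕ × Fin 3 × Fin 3 =>
      (Xg q) ^ p.1 * (Yg q) ^ (p.2.1 : ℕ) * (Tg q) ^ (p.2.2 : ℕ))) = ⊤ := by
  rw [← span_monomials_eq_span_truncated ℂ (Xg q) (Yg_pow_three q) (Tg_pow_three q)]
  exact span_monomials_eq_top_of_semiconjBy
    (semiconjBy_inv_smul_of_mul_eq_smul hq (Xg_mul_Yg q))
    (semiconjBy_inv_smul_of_mul_eq_smul hq (Xg_mul_Tg q))
    (semiconjBy_inv_smul_of_mul_eq_smul (pow_ne_zero 2 hq) (Yg_mul_Tg q))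
    (adjoin_Xg_Yg_Tg q)

/-- Left multiplication by the generators on the formal monomials, the basis vector at `(k, l, m)`
standing for `x ^ k * y ^ l * θ ^ m`. The powers of `q⁻¹` come from moving `y` and `θ` to the right;
the index runs over all of `ℕ × ℕ × ℕ`, and the zero weights encode `y ^ 3 = θ ^ 3 = 0`. -/
def genOp (q : ℂ) : Gen → Module.End ℂ (ℕ × ℕ × ℕ →₀ ℂ)
  | .x => weightedShift (1, 0, 0) 1
  | .y => weightedShift (0, 1, 0) fun p => if p.2.1 < 2 then q⁻¹ ^ p.1 else 0
  | .th => weightedShift (0, 0, 1) fun p => if p.2.2 < 2 then q⁻¹ ^ (p.1 + 2 * p.2.1) else 0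

section GenOp

variable {q : ℂ}

lemma genOp_x_mul_genOp_y (hq : q ≠ 0) :
    genOp q .x * genOp q .y = q • (genOp q .y * genOp q .x) := by
  refine weightedShift_mul_eq_smul fun ⟨k, l, m⟩ => ?_
  simp [pow_add, hq]

lemma genOp_x_mul_genOp_th (hq : q ≠ 0) :
    genOp q .x * genOp q .th = q • (genOp q .th * genOp q .x) := by
  refine weightedShift_mul_eq_smul fun ⟨k, l, m⟩ => ?_
  simp [pow_add, mul_assoc, hq]

lemma genOp_y_mul_genOp_th (hq : q ≠ 0) :
    genOp q .y * genOp q .th = q ^ 2 • (genOp q .th * genOp q .y) := by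
  refine weightedShift_mul_eq_smul fun ⟨k, l, m⟩ => ?_
  simp only [Prod.mk_add_mk, zero_add]
  split_ifs
  · simp only [mul_add, mul_one, pow_add, inv_pow]
    field_simp
  all_goals ring

variable (q)

lemma genOp_y_pow_three : genOp q .y ^ 3 = 0 :=
  weightedShift_pow_succ_eq_zero fun _ => if_neg (Nat.le_add_right 2 _).not_gt

lemma genOp_th_pow_three : genOp q .th ^ 3 = 0 :=
  weightedShift_pow_succ_eq_zero fun _ => if_neg (Nat.le_add_right 2 _).not_gt

lemma genOp_x_pow_single (k l m : ℕ) :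
    (genOp q .x ^ k) (Finsupp.single (0, l, m) 1) = Finsupp.single (k, l, m) 1 :=
  weightedShift_pow_single_of_weight_eq_one (by simp) (fun _ _ => rfl) 1

lemma genOp_y_pow_single {l : ℕ} (hl : l < 3) (m : ℕ) :
    (genOp q .y ^ l) (Finsupp.single (0, 0, m) 1) = Finsupp.single (0, l, m) 1 := by
  refine weightedShift_pow_single_of_weight_eq_one (by simp) (fun j hj => ?_) 1
  have hj2 : j < 2 := by omega
  simp [hj2]

lemma genOp_th_pow_single {m : ℕ} (hm : m < 3) :
    (genOp q .th ^ m) (Finsupp.single (0, 0, 0) 1) = Finsupp.single (0, 0, m) 1 := by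
  refine weightedShift_pow_single_of_weight_eq_one (by simp) (fun j hj => ?_) 1
  have hj2 : j < 2 := by omega
  simp [hj2]

end GenOp

lemma lift_genOp_eq_of_rel {q : ℂ} (hq : q ≠ 0) ⦃u v : FA⦄ (huv : QRel q u v) :
    FreeAlgebra.lift ℂ (genOp q) u = FreeAlgebra.lift ℂ (genOp q) v := by
  cases huv <;>
    simp only [Xf, Yf, Tf, map_mul, map_smul, map_pow, map_zero, FreeAlgebra.lift_ι_apply]
  case xy => exact genOp_x_mul_genOp_y hq
  case xth => exact genOp_x_mul_genOp_th hq
  case yth => exact genOp_y_mul_genOp_th hq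
  case ycube => exact genOp_y_pow_three q
  case thcube => exact genOp_th_pow_three q

/-- The representation of `Osp q` on the formal monomials extending `genOp q`. -/
def monomialRep {q : ℂ} (hq : q ≠ 0) : Osp q →ₐ[ℂ] Module.End ℂ (ℕ × ℕ × ℕ →₀ ℂ) :=
  RingQuot.liftAlgHom ℂ ⟨FreeAlgebra.lift ℂ (genOp q), lift_genOp_eq_of_rel hq⟩

lemma monomialRep_mkAlgHom_ι {q : ℂ} (hq : q ≠ 0) (g : Gen) :
    monomialRep hq (RingQuot.mkAlgHom ℂ (QRel q) (FreeAlgebra.ι ℂ g)) = genOp q g := by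
  rw [monomialRep, RingQuot.liftAlgHom_mkAlgHom_apply, FreeAlgebra.lift_ι_apply]

lemma monomialRep_monomial_single {q : ℂ} (hq : q ≠ 0) (k : ℕ) {l m : ℕ} (hl : l < 3)
    (hm : m < 3) :
    monomialRep hq (Xg q ^ k * Yg q ^ l * Tg q ^ m) (Finsupp.single (0, 0, 0) 1) =
      Finsupp.single (k, l, m) 1 := by
  simp only [Xg, Yg, Tg, Xf, Yf, Tf, map_mul, map_pow, monomialRep_mkAlgHom_ι,
    Module.End.mul_apply]
  rw [genOp_th_pow_single q hm, genOp_y_pow_single q hl, genOp_x_pow_single]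

lemma linearIndependent_monomials {q : ℂ} (hq : q ≠ 0) :
    LinearIndependent ℂ (fun p : ℕ × Fin 3 × Fin 3 =>
      (Xg q) ^ p.1 * (Yg q) ^ (p.2.1 : ℕ) * (Tg q) ^ (p.2.2 : ℕ)) := by
  let applyVacuum : Osp q →ₗ[ℂ] (ℕ × ℕ × ℕ →₀ ℂ) :=
    LinearMap.applyₗ (Finsupp.single (0, 0, 0) 1) ∘ₗ (monomialRep hq).toLinearMap
  have exponents_injective : Function.Injective
      (Prod.map id (Prod.map Fin.val Fin.val) : ℕ × Fin 3 × Fin 3 → ℕ × ℕ × ℕ) :=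
    Function.injective_id.prodMap (Fin.val_injective.prodMap Fin.val_injective)
  refine LinearIndependent.of_comp applyVacuum ?_
  convert (Finsupp.linearIndependent_single_one ℂ (ℕ × ℕ × ℕ)).comp _ exponents_injective using 1
  funext p
  exact monomialRep_monomial_single hq p.1 p.2.1.isLt p.2.2.isLt

theorem monomials_form_basis_general (q : ℂ) (hq : q ≠ 0) :
    LinearIndependent ℂ (fun p : ℕ × Fin 3 × Fin 3 =>
      (Xg q) ^ p.1 * (Yg q) ^ (p.2.1 : ℕ) * (Tg q) ^ (p.2.2 : ℕ)) ∧
    Submodule.span ℂ (Set.range (fun p : ℕ × Fin 3 × Fin 3 =>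
      (Xg q) ^ p.1 * (Yg q) ^ (p.2.1 : ℕ) * (Tg q) ^ (p.2.2 : ℕ))) = ⊤ :=
  ⟨linearIndependent_monomials hq, span_monomials_eq_top hq⟩

/-- The family of monomials `x^k y^l θ^m`, `k ∈ ℕ`, `l, m ∈ {0,1,2}`, forms a
basis of `O(ℝ_q(2|1))` as a ℂ-vector space (it is linearly independent and spans). -/
theorem monomials_form_basis (q : ℂ) (hq3 : q ^ 3 = 1) (hq1 : q ≠ 1) :
    LinearIndependent ℂ (fun p : ℕ × Fin 3 × Fin 3 =>
      (Xg q) ^ p.1 * (Yg q) ^ (p.2.1 : ℕ) * (Tg q) ^ (p.2.2 : ℕ)) ∧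
    Submodule.span ℂ (Set.range (fun p : ℕ × Fin 3 × Fin 3 =>
      (Xg q) ^ p.1 * (Yg q) ^ (p.2.1 : ℕ) * (Tg q) ^ (p.2.2 : ℕ))) = ⊤ := by
  exact monomials_form_basis_general q (IsUnit.of_pow_eq_one hq3 three_ne_zero).ne_zero
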